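/- Let A be an admissible set of addition chains, let r ≥ 0 be a real number, and suppose Q ≥ 1 is an integer such that ν₂(n) ≤ Q for every positive integer n with δ^A(n) ≤ r. Then 𝒟^A ∩ [0, r] is a well-ordered subset of the real numbers with order type at least ω^⌊r⌋ and at most ω^(Q−1)·Q + ω^(Q−2)·(Q−1) + … + ω²·3 + ω·2 + 1, which is less than ω^(Q−1)·(Q+1) and hence less than ω^Q. The same upper and lower bounds hold for the order type of 𝒟^A_st ∩ [0, r]. -/

import Mathlib

/-- `c` is an addition chain: a nonempty list of positive integers starting at `1`
such that every later entry is the sum of two (not necessarily distinct) earlier entries. -/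
def IsAdditionChain (c : List ℕ) : Prop :=
  c.getD 0 0 = 1 ∧
    ∀ k, 0 < k → k < c.length →
      ∃ i j, i < k ∧ j < k ∧ c.getD k 0 = c.getD i 0 + c.getD j 0

/-- `c` is an addition chain whose last entry is `n`; its length is `c.length - 1`. -/
def IsAdditionChainFor (c : List ℕ) (n : ℕ) : Prop :=
  IsAdditionChain c ∧ c.getD (c.length - 1) 0 = n

/-- ν₂(n): the number of 1's in the binary expansion of `n`. -/
def binaryWeight (n : ℕ) : ℕ := (Nat.digits 2 n).sum

/-- `ℓ^A(n)`: the least length (number of steps, i.e. one less than the number of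
entries) of an addition chain for `n` belonging to the set `A` of addition chains. -/
noncomputable def chainLength (A : Set (List ℕ)) (n : ℕ) : ℕ :=
  sInf {r | ∃ c ∈ A, IsAdditionChainFor c n ∧ c.length = r + 1}

/-- A set `A` of addition chains is admissible if (i) every positive `n` has a chain
in `A` of length at most `⌊log₂ n⌋ + ν₂(n) - 1` (i.e. with at most
`⌊log₂ n⌋ + ν₂(n)` entries) and (ii) `ℓ^A(2n) ≤ ℓ^A(n) + 1` for all positive `n`. -/
def Admissible (A : Set (List ℕ)) : Prop :=
  (∀ n : ℕ, 0 < n → ∃ c ∈ A, IsAdditionChainFor c n ∧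
      c.length ≤ Nat.log 2 n + binaryWeight n) ∧
  ∀ n : ℕ, 0 < n → chainLength A (2 * n) ≤ chainLength A n + 1

/-- The A-defect `δ^A(n) = ℓ^A(n) - log₂ n`. -/
noncomputable def Adefect (A : Set (List ℕ)) (n : ℕ) : ℝ :=
  (chainLength A n : ℝ) - Real.logb 2 n

/-- `m` is A-stable if `ℓ^A(2^k m) = ℓ^A(m) + k` for all `k ≥ 0`. -/
def AStable (A : Set (List ℕ)) (m : ℕ) : Prop :=
  ∀ k : ℕ, chainLength A (2 ^ k * m) = chainLength A m + k

/-- `𝒟^A`: the set of all A-defect values. -/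
def defectSet (A : Set (List ℕ)) : Set ℝ :=
  {d | ∃ n : ℕ, 0 < n ∧ d = Adefect A n}

/-- `𝒟^A_st`: the set of all A-stable defects. -/
def stableDefectSet (A : Set (List ℕ)) : Set ℝ :=
  {d | ∃ n : ℕ, 0 < n ∧ AStable A n ∧ d = Adefect A n}

open scoped Classical in
/-- The order type of a well-ordered subset `S` of a linear order
(junk value `0` if `S` is not well-ordered, i.e. not `Set.IsWF`). -/
noncomputable def setOrderType {X : Type*} [LinearOrder X] (S : Set X) : Ordinal :=
  if h : S.IsWF then
    letI : WellFoundedLT S := ⟨h⟩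
    Ordinal.type ((· < ·) : S → S → Prop)
  else 0

/-- `ω^(Q-1)·Q + ω^(Q-2)·(Q-1) + … + ω²·3 + ω·2 + 1`. -/
noncomputable def boundSum : ℕ → Ordinal
  | 0 => 0
  | q + 1 => Ordinal.omega0 ^ (q : Ordinal) * (q + 1) + boundSum q

/-! ### Order-type tools -/

/-- `S` embeds monotonically into the ordinals below `α`. -/
def HasEmb (S : Set ℝ) (α : Ordinal.{0}) : Prop :=
  ∃ f : ℝ → Ordinal.{0}, StrictMonoOn f S ∧ ∀ x ∈ S, f x < α

theorem HasEmb.mono {S T : Set ℝ} {α β : Ordinal.{0}} (h : HasEmb T α) (hS : S ⊆ T)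
    (hab : α ≤ β) : HasEmb S β := by
  obtain ⟨f, hf, hb⟩ := h
  exact ⟨f, hf.mono hS, fun x hx => (hb x (hS hx)).trans_le hab⟩

theorem HasEmb.isWF {S : Set ℝ} {α : Ordinal.{0}} (h : HasEmb S α) : S.IsWF := by
  obtain ⟨f, hf, hb⟩ := h
  have : WellFounded ((· < ·) : S → S → Prop) := by
    refine Subrelation.wf (r := InvImage (· < ·) (fun x : S => f x)) ?_
      (InvImage.wf _ Ordinal.lt_wf)
    intro a b hab
    exact hf a.2 b.2 hab
  exact this

theorem HasEmb.type_le {S : Set ℝ} {α : Ordinal.{0}} (h : HasEmb S α) :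
    setOrderType S ≤ α := by
  have hwf := h.isWF
  obtain ⟨f, hf, hb⟩ := h
  rw [setOrderType, dif_pos hwf]
  letI : WellFoundedLT S := ⟨hwf⟩
  by_contra! hlt
  have key : ∀ x : S, Ordinal.typein ((· < ·) : S → S → Prop) x ≤ f x := by
    intro x
    induction x using WellFoundedLT.induction with
    | ind x ih =>
      by_contra! hx
      obtain ⟨y, hy⟩ := Ordinal.typein_surj ((· < ·) : S → S → Prop)
        (hx.trans (Ordinal.typein_lt_type _ x))
      rw [← hy, Ordinal.typein_lt_typein] at hx
      have h1 := ih y hx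
      rw [hy] at h1
      exact absurd (hf y.2 x.2 hx) (not_lt.2 h1)
  obtain ⟨y, hy⟩ := Ordinal.typein_surj ((· < ·) : S → S → Prop) hlt
  have := key y
  rw [hy] at this
  exact absurd (hb y y.2) (not_lt.2 this)

theorem HasEmb.of_wf {S : Set ℝ} (h : S.IsWF) : HasEmb S (setOrderType S) := by
  classical
  rw [setOrderType, dif_pos h]
  letI : WellFoundedLT S := ⟨h⟩
  refine ⟨fun x => if hx : x ∈ S then
    Ordinal.typein ((· < ·) : S → S → Prop) ⟨x, hx⟩ else 0, ?_, ?_⟩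
  · intro a ha b hb hab
    simp only [dif_pos ha, dif_pos hb]
    rw [Ordinal.typein_lt_typein]
    exact hab
  · intro x hx
    simp only [dif_pos hx]
    exact Ordinal.typein_lt_type _ _

/-- Lexicographic composition of embeddings along a monotone map. -/
theorem HasEmb.fiber {S : Set ℝ} {α β : Ordinal.{0}} (g : ℝ → Ordinal.{0})
    (hg : MonotoneOn g S) (hb : ∀ x ∈ S, g x < β)
    (h : ∀ c, HasEmb {x ∈ S | g x = c} α) : HasEmb S (α * β) := by
  choose f hf hfa using h
  refine ⟨fun x => α * g x + f (g x) x, ?_, ?_⟩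
  · intro x hx y hy hxy
    rcases (hg hx hy hxy.le).lt_or_eq with hlt | heq
    · calc α * g x + f (g x) x < α * g x + α := by
            gcongr
            exact hfa _ x ⟨hx, rfl⟩
        _ = α * Order.succ (g x) := by rw [Ordinal.mul_succ]
        _ ≤ α * g y := by
            gcongr
            exact Order.succ_le_of_lt hlt
        _ ≤ _ := le_self_add
    · simp only [heq]
      gcongr
      exact hf (g y) ⟨hx, heq⟩ ⟨hy, rfl⟩ hxy
  · intro x hx
    calc α * g x + f (g x) x < α * g x + α := by
          gcongr
          exact hfa _ x ⟨hx, rfl⟩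
      _ = α * Order.succ (g x) := by rw [Ordinal.mul_succ]
      _ ≤ α * β := by
          gcongr
          exact Order.succ_le_of_lt (hb x hx)

theorem HasEmb.top {S : Set ℝ} {α : Ordinal.{0}} (a : ℝ) (hS : ∀ x ∈ S, x ≤ a)
    (h : HasEmb {x ∈ S | x ≠ a} α) : HasEmb S (α + 1) := by
  classical
  obtain ⟨f, hf, hfa⟩ := h
  refine ⟨fun x => if x = a then α else f x, ?_, ?_⟩
  · intro x hx y hy hxy
    have hxa : x ≠ a := (hxy.trans_le (hS y hy)).ne
    simp only [if_neg hxa]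
    split_ifs with h1
    · exact hfa x ⟨hx, hxa⟩
    · exact hf ⟨hx, hxa⟩ ⟨hy, h1⟩ hxy
  · intro x hx
    dsimp only
    rw [← Order.succ_eq_add_one, Order.lt_succ_iff]
    split_ifs with h1
    · exact le_rfl
    · exact (hfa x ⟨hx, h1⟩).le

theorem HasEmb.comap {S T : Set ℝ} {α : Ordinal.{0}} (h : HasEmb T α) (g : ℝ → ℝ)
    (hg : StrictMonoOn g S) (hm : Set.MapsTo g S T) : HasEmb S α := by
  obtain ⟨f, hf, hfa⟩ := h
  exact ⟨f ∘ g, hf.comp hg hm, fun x hx => hfa _ (hm hx)⟩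

/-! ### Lower-bound tool -/

/-- `S` contains a copy of `ω ^ k`. -/
def Big : ℕ → Set ℝ → Prop
  | 0, S => S.Nonempty
  | k + 1, S => ∃ F : ℕ → Set ℝ, (∀ b, F b ⊆ S) ∧ (∀ b, Big k (F b)) ∧
      ∀ b b', b < b' → ∀ x ∈ F b, ∀ y ∈ F b', x < y

theorem Big.nonempty : ∀ {k : ℕ} {S : Set ℝ}, Big k S → S.Nonempty
  | 0, _, h => h
  | _ + 1, _, ⟨_, hF, hB, _⟩ => (Big.nonempty (hB 0)).mono (hF 0)

theorem Big.mono : ∀ {k : ℕ} {S T : Set ℝ}, Big k S → S ⊆ T → Big k T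
  | 0, _, _, h, hs => Set.Nonempty.mono hs h
  | _ + 1, _, _, ⟨F, hF, hB, hl⟩, hs => ⟨F, fun b => (hF b).trans hs, hB, hl⟩

theorem Big.image : ∀ {k : ℕ} {S : Set ℝ} {g : ℝ → ℝ}, Big k S → StrictMonoOn g S →
    Big k (g '' S)
  | 0, _, _, h, _ => Set.Nonempty.image _ h
  | k + 1, S, g, ⟨F, hF, hB, hl⟩, hg => by
      refine ⟨fun b => g '' F b, fun b => Set.image_mono (hF b),
        fun b => Big.image (hB b) (hg.mono (hF b)), ?_⟩
      rintro b b' hbb _ ⟨x, hx, rfl⟩ _ ⟨y, hy, rfl⟩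
      exact hg (hF b hx) (hF b' hy) (hl b b' hbb x hx y hy)

theorem Big.color {N : ℕ} (c : ℝ → Fin N) : ∀ {k : ℕ} {S : Set ℝ}, Big k S →
    ∃ i, Big k {x ∈ S | c x = i}
  | 0, _, ⟨x, hx⟩ => ⟨c x, x, hx, rfl⟩
  | k + 1, S, ⟨F, hF, hB, hl⟩ => by
      choose i hi using fun b => Big.color c (hB b)
      obtain ⟨j, hj⟩ := Finite.exists_infinite_fiber i
      have hinf : (i ⁻¹' {j}).Infinite := Set.infinite_coe_iff.1 hj
      refine ⟨j, fun b => {x ∈ F (Nat.nth (· ∈ i ⁻¹' {j}) b) | c x = j}, ?_, ?_, ?_⟩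
      · rintro b x ⟨hx, hc⟩
        exact ⟨hF _ hx, hc⟩
      · intro b
        have h1 : i (Nat.nth (· ∈ i ⁻¹' {j}) b) = j := Nat.nth_mem_of_infinite hinf b
        have h2 := hi (Nat.nth (· ∈ i ⁻¹' {j}) b)
        rw [h1] at h2
        exact h2
      · rintro b b' hbb x ⟨hx, -⟩ y ⟨hy, -⟩
        exact hl _ _ (Nat.nth_strictMono hinf hbb) x hx y hy

theorem Big.le_of_emb : ∀ {k : ℕ} {S : Set ℝ}, Big k S → ∀ (f : ℝ → Ordinal.{0}),
    StrictMonoOn f S → ∀ γ α : Ordinal.{0}, (∀ x ∈ S, γ ≤ f x) → (∀ x ∈ S, f x < α) →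
    γ + Ordinal.omega0 ^ (k : Ordinal.{0}) ≤ α
  | 0, S, ⟨x, hx⟩, f, hf, γ, α, h1, h2 => by
      simp only [Nat.cast_zero, Ordinal.opow_zero]
      rw [← Order.succ_eq_add_one]
      exact Order.succ_le_of_lt ((h1 x hx).trans_lt (h2 x hx))
  | k + 1, S, ⟨F, hF, hB, hl⟩, f, hf, γ, α, h1, h2 => by
      have key : ∀ n : ℕ, ∀ x ∈ F n,
          γ + Ordinal.omega0 ^ (k : Ordinal.{0}) * (n : Ordinal.{0}) ≤ f x := by
        intro n
        induction n with
        | zero =>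
          intro x hx
          simpa using h1 x (hF 0 hx)
        | succ n ih =>
          intro x hx
          have := Big.le_of_emb (hB n) f (hf.mono (hF n)) _ (f x) ih
            (fun y hy => hf (hF _ hy) (hF _ hx) (hl n (n + 1) n.lt_succ_self y hy x hx))
          rwa [add_assoc, ← Ordinal.mul_succ, Order.succ_eq_add_one, ← Nat.cast_succ] at this
      have hle : ∀ n : ℕ,
          γ + Ordinal.omega0 ^ (k : Ordinal.{0}) * (n : Ordinal.{0}) ≤ α := by
        intro n
        obtain ⟨x, hx⟩ := Big.nonempty (hB n)
        exact (key n x hx).trans (h2 x (hF n hx)).le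
      have hγ : γ ≤ α := by simpa using hle 0
      obtain ⟨δ, rfl⟩ : ∃ δ, α = γ + δ := ⟨α - γ, (Ordinal.add_sub_cancel_of_le hγ).symm⟩
      rw [Nat.cast_succ, ← Order.succ_eq_add_one, Ordinal.opow_succ]
      gcongr
      rw [Ordinal.mul_le_iff_of_isSuccLimit Ordinal.isSuccLimit_omega0]
      intro b hb
      obtain ⟨n, rfl⟩ := Ordinal.lt_omega0.1 hb
      exact le_of_add_le_add_left (hle n)

theorem Big.le_type {k : ℕ} {S : Set ℝ} (h : Big k S) (hS : S.IsWF) :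
    Ordinal.omega0 ^ (k : Ordinal.{0}) ≤ setOrderType S := by
  obtain ⟨f, hf, hfa⟩ := HasEmb.of_wf hS
  simpa using h.le_of_emb f hf 0 _ (fun _ _ => zero_le) hfa

/-! ### Ordinal inequalities -/

theorem omega_pow_mul_nat_lt.{u} (q n : ℕ) :
    Ordinal.omega0 ^ (q : Ordinal.{u}) * (n : Ordinal.{u}) <
      Ordinal.omega0 ^ ((q + 1 : ℕ) : Ordinal.{u}) := by
  rw [Nat.cast_succ, ← Order.succ_eq_add_one, Ordinal.opow_succ]
  exact mul_lt_mul_of_pos_left (Ordinal.natCast_lt_omega0 n)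
    (Ordinal.opow_pos _ Ordinal.omega0_pos)

theorem boundSum_lt.{u} : ∀ q : ℕ, boundSum.{u} q < Ordinal.omega0 ^ (q : Ordinal.{u})
  | 0 => by simp [boundSum]
  | q + 1 => by
      rw [boundSum]
      calc _ < Ordinal.omega0 ^ (q : Ordinal.{u}) * (q + 1) +
              Ordinal.omega0 ^ (q : Ordinal.{u}) := by
              gcongr
              exact boundSum_lt q
        _ = Ordinal.omega0 ^ (q : Ordinal.{u}) * ((q + 2 : ℕ) : Ordinal.{u}) := by
              rw [← Ordinal.mul_succ, Order.succ_eq_add_one, add_assoc]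
              norm_num
        _ < _ := omega_pow_mul_nat_lt _ _

theorem boundSum_lt'.{u} (q : ℕ) : boundSum.{u} (q + 1) <
    Ordinal.omega0 ^ (q : Ordinal.{u}) * (((q + 1 : ℕ) : Ordinal.{u}) + 1) := by
  rw [boundSum, Nat.cast_succ, ← Order.succ_eq_add_one ((q : Ordinal.{u}) + 1), Ordinal.mul_succ]
  exact (add_lt_add_iff_left _).2 (boundSum_lt q)

/-- The order type of normalized numbers with at most `q + 1` ones. -/
noncomputable def topType : ℕ → Ordinal.{0}
  | 0 => 1
  | q + 1 => Ordinal.omega0 ^ ((q + 1 : ℕ) : Ordinal.{0}) + 1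

theorem succ_mul_nat_le (q n : ℕ) :
    topType (q + 1) * (n : Ordinal.{0}) ≤
      Ordinal.omega0 ^ ((q + 1 : ℕ) : Ordinal.{0}) * (n : Ordinal.{0}) + 1 := by
  rw [topType]
  induction n with
  | zero => simp
  | succ n ih =>
    have h1 : (1 : Ordinal.{0}) + Ordinal.omega0 ^ ((q + 1 : ℕ) : Ordinal.{0}) =
        Ordinal.omega0 ^ ((q + 1 : ℕ) : Ordinal.{0}) := by
      apply Ordinal.one_add_of_omega0_le
      calc Ordinal.omega0 = Ordinal.omega0 ^ (1 : Ordinal.{0}) := (Ordinal.opow_one _).symm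
        _ ≤ _ := Ordinal.opow_le_opow_right Ordinal.omega0_pos (by
            exact_mod_cast Nat.succ_le_succ (Nat.zero_le q))
    rw [Nat.cast_succ n, ← Order.succ_eq_add_one (n : Ordinal.{0}), Ordinal.mul_succ,
      Ordinal.mul_succ]
    calc _ ≤ (Ordinal.omega0 ^ ((q + 1 : ℕ) : Ordinal.{0}) * (n : Ordinal.{0}) + 1) +
          (Ordinal.omega0 ^ ((q + 1 : ℕ) : Ordinal.{0}) + 1) := by gcongr
      _ = _ := by
        rw [add_assoc, ← add_assoc 1, h1, ← add_assoc]

theorem topType_mul_omega (q : ℕ) : topType q * Ordinal.omega0 + 1 ≤ topType (q + 1) := by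
  rw [show topType (q + 1) = Ordinal.omega0 ^ ((q + 1 : ℕ) : Ordinal.{0}) + 1 from rfl]
  gcongr
  rcases q with _ | q
  · simp [topType]
  · rw [Ordinal.mul_le_iff_of_isSuccLimit Ordinal.isSuccLimit_omega0]
    intro b hb
    obtain ⟨n, rfl⟩ := Ordinal.lt_omega0.1 hb
    refine (succ_mul_nat_le q n).trans ?_
    rw [← Order.succ_eq_add_one]
    exact Order.succ_le_of_lt (omega_pow_mul_nat_lt _ _)

theorem topType_mul_le (q : ℕ) :
    topType q * ((q + 1 : ℕ) : Ordinal.{0}) ≤ boundSum.{0} (q + 1) := by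
  rcases q with _ | q
  · simp [topType, boundSum]
  · refine (succ_mul_nat_le q _).trans ?_
    rw [boundSum, Nat.cast_succ (q + 1)]
    gcongr
    rw [Order.one_le_iff_pos, boundSum]
    refine lt_of_lt_of_le ?_ le_self_add
    exact mul_pos (Ordinal.opow_pos _ Ordinal.omega0_pos) (by
      rw [← Order.succ_eq_add_one]; exact Order.bot_lt_succ _)

/-! ### Binary weight -/

theorem binaryWeight_double (n : ℕ) : binaryWeight (2 * n) = binaryWeight n := by
  rcases Nat.eq_zero_or_pos n with rfl | h
  · rfl
  · rw [binaryWeight, binaryWeight, Nat.digits_def' (by norm_num) (by omega)]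
    simp

theorem binaryWeight_double_add_one (n : ℕ) :
    binaryWeight (2 * n + 1) = binaryWeight n + 1 := by
  rw [binaryWeight, binaryWeight, Nat.digits_def' (by norm_num) (by omega)]
  have h1 : (2 * n + 1) % 2 = 1 := by omega
  have h2 : (2 * n + 1) / 2 = n := by omega
  rw [h1, h2, List.sum_cons, add_comm]

theorem binaryWeight_top (k : ℕ) : ∀ n < 2 ^ k, binaryWeight (2 ^ k + n) = binaryWeight n + 1 := by
  induction k with
  | zero =>
    intro n hn
    obtain rfl : n = 0 := by simpa using hn
    simp [binaryWeight]
  | succ k ih =>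
    intro n hn
    rw [pow_succ] at hn ⊢
    obtain ⟨m, rfl | rfl⟩ := Nat.even_or_odd' n
    · rw [show 2 ^ k * 2 + 2 * m = 2 * (2 ^ k + m) by ring, binaryWeight_double,
        binaryWeight_double, ih m (by omega)]
    · rw [show 2 ^ k * 2 + (2 * m + 1) = 2 * (2 ^ k + m) + 1 by ring,
        binaryWeight_double_add_one, binaryWeight_double_add_one, ih m (by omega)]

theorem binaryWeight_pow_mul (k n : ℕ) : binaryWeight (2 ^ k * n) = binaryWeight n := by
  induction k with
  | zero => simp
  | succ k ih => rw [pow_succ', mul_assoc, binaryWeight_double, ih]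

/-- The normalization `n / 2 ^ ⌊log₂ n⌋`. -/
noncomputable def nrm (n : ℕ) : ℝ := (n : ℝ) / 2 ^ Nat.log 2 n

theorem nrm_pos {n : ℕ} (hn : 0 < n) : 1 ≤ nrm n := by
  rw [nrm, le_div_iff₀ (by positivity), one_mul]
  exact_mod_cast Nat.pow_log_le_self 2 hn.ne'

theorem nrm_lt (n : ℕ) : nrm n < 2 := by
  rw [nrm, div_lt_iff₀ (by positivity), ← pow_succ']
  exact_mod_cast Nat.lt_pow_succ_log_self (by norm_num) n

theorem log_top {L n : ℕ} (hn : n < 2 ^ L) : Nat.log 2 (2 ^ L + n) = L := by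
  rw [Nat.log_eq_iff (Or.inr ⟨by norm_num, by positivity⟩), pow_succ]
  omega

/-- Normalized numbers with exactly `k + 1` ones, negated. -/
def NE (k : ℕ) : Set ℝ := {x | ∃ n : ℕ, 0 < n ∧ binaryWeight n = k + 1 ∧ x = -nrm n}

/-- Normalized numbers with at most `k + 1` ones, negated. -/
def NU (k : ℕ) : Set ℝ := {x | ∃ n : ℕ, 0 < n ∧ binaryWeight n ≤ k + 1 ∧ x = -nrm n}

theorem nrm_shift {n : ℕ} (b : ℕ) :
    n < 2 ^ (Nat.log 2 n + b + 1) ∧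
    nrm (2 ^ (Nat.log 2 n + b + 1) + n) = 1 + nrm n / 2 ^ (b + 1) := by
  have h : n < 2 ^ (Nat.log 2 n + b + 1) := by
    refine (Nat.lt_pow_succ_log_self (b := 2) (by norm_num) n).trans_le ?_
    exact Nat.pow_le_pow_right (by norm_num) (by omega)
  refine ⟨h, ?_⟩
  rw [nrm, log_top h, nrm]
  push_cast
  rw [add_assoc, pow_add]
  field_simp

theorem big_NE : ∀ k, Big k (NE k)
  | 0 => ⟨-nrm 1, 1, one_pos, by simp [binaryWeight], rfl⟩
  | k + 1 => by
      refine ⟨fun b => (fun x => -1 + x / 2 ^ (b + 1)) '' NE k, ?_, ?_, ?_⟩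
      · rintro b _ ⟨_, ⟨n, hn, hw, rfl⟩, rfl⟩
        obtain ⟨h1, h2⟩ := nrm_shift (n := n) b
        refine ⟨2 ^ (Nat.log 2 n + b + 1) + n, by positivity, ?_, ?_⟩
        rotate_left
        · show -1 + -nrm n / 2 ^ (b + 1) = -nrm (2 ^ (Nat.log 2 n + b + 1) + n)
          rw [h2]
          ring
        · rw [binaryWeight_top _ _ h1, hw]
      · intro b
        apply (big_NE k).image
        intro x _ y _ hxy
        dsimp only
        gcongr
      · rintro b b' hbb _ ⟨_, ⟨n, hn, -, rfl⟩, rfl⟩ _ ⟨_, ⟨m, hm, -, rfl⟩, rfl⟩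
        have h1 := nrm_pos hn
        have h2 := nrm_lt m
        dsimp only
        have h3 : nrm m / 2 ^ (b' + 1) < nrm n / 2 ^ (b + 1) := by
          calc nrm m / 2 ^ (b' + 1) < 2 / 2 ^ (b' + 1) := by gcongr
            _ ≤ 2 / 2 ^ (b + 1 + 1) := by
              gcongr
              · norm_num
              · omega
            _ = 1 / 2 ^ (b + 1) := by
              rw [pow_succ _ (b + 1)]
              field_simp
            _ ≤ _ := by gcongr
        rw [neg_div, neg_div]
        linarith

/-- every `n` is a power of two or has a remainder after removing the top bit -/
theorem nrm_cases {n : ℕ} (hn : 0 < n) : nrm n = 1 ∨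
    ∃ m b : ℕ, 0 < m ∧ binaryWeight n = binaryWeight m + 1 ∧
      nrm n = 1 + nrm m / 2 ^ (b + 1) := by
  have h0 := Nat.pow_log_le_self 2 hn.ne'
  have h1 := Nat.lt_pow_succ_log_self (b := 2) (by norm_num) n
  obtain ⟨m, hm⟩ := Nat.exists_eq_add_of_le h0
  rw [pow_succ] at h1
  have hm2 : m < 2 ^ Nat.log 2 n := by omega
  rcases Nat.eq_zero_or_pos m with rfl | hmp
  · left
    rw [nrm, div_eq_one_iff_eq (by positivity)]
    exact_mod_cast hm
  · right
    have hlt : Nat.log 2 m < Nat.log 2 n := Nat.log_lt_of_lt_pow hmp.ne' hm2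
    obtain ⟨b, hb⟩ := Nat.exists_eq_add_of_lt hlt
    refine ⟨m, b, hmp, ?_, ?_⟩
    · conv_lhs => rw [hm]
      exact binaryWeight_top _ _ hm2
    · have := (nrm_shift (n := m) b).2
      rwa [← hb, ← hm] at this

theorem binaryWeight_pos {n : ℕ} (hn : 0 < n) : 0 < binaryWeight n := by
  induction n using Nat.strong_induction_on with
  | _ n ih =>
    obtain ⟨m, rfl | rfl⟩ := Nat.even_or_odd' n
    · rw [binaryWeight_double]
      exact ih m (by omega) (by omega)
    · rw [binaryWeight_double_add_one]
      omega

theorem hasEmb_NU : ∀ k, HasEmb (NU k) (topType k)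
  | 0 => by
      refine ⟨fun _ => 0, ?_, fun _ _ => by simp [topType]⟩
      have : ∀ x ∈ NU 0, x = -1 := by
        rintro _ ⟨n, hn, hw, rfl⟩
        rcases nrm_cases hn with h | ⟨m, b, hm, h, -⟩
        · rw [h]
        · have := binaryWeight_pos hm
          omega
      intro x hx y hy hxy
      rw [this x hx, this y hy] at hxy
      exact absurd hxy (lt_irrefl _)
  | k + 1 => by
      refine HasEmb.mono ?_ subset_rfl (topType_mul_omega k)
      apply HasEmb.top (-1)
      · rintro _ ⟨n, hn, -, rfl⟩
        have := nrm_pos hn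
        linarith
      -- elements different from the top
      have hrep : ∀ x ∈ {x ∈ NU (k + 1) | x ≠ -1}, ∃ b : ℕ, ∃ y ∈ NU k,
          x = -1 + y / 2 ^ (b + 1) := by
        rintro _ ⟨⟨n, hn, hw, rfl⟩, hne⟩
        rcases nrm_cases hn with h | ⟨m, b, hm, h, h'⟩
        · rw [h] at hne
          exact absurd rfl hne
        · refine ⟨b, -nrm m, ⟨m, hm, by omega, rfl⟩, ?_⟩
          rw [h']
          ring
      classical
      let g : ℝ → ℕ := fun x => if h : ∃ b : ℕ, ∃ y ∈ NU k, x = -1 + y / 2 ^ (b + 1)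
        then h.choose else 0
      have hg : ∀ x ∈ {x ∈ NU (k + 1) | x ≠ -1}, ∃ y ∈ NU k, x = -1 + y / 2 ^ (g x + 1) := by
        intro x hx
        have h := hrep x hx
        have : g x = h.choose := dif_pos h
        rw [this]
        exact h.choose_spec
      apply HasEmb.fiber (fun x => (g x : Ordinal.{0}))
      · intro x hx y hy hxy
        obtain ⟨_, ⟨n, hn, -, rfl⟩, hx'⟩ := hg x hx
        obtain ⟨_, ⟨m, hm, -, rfl⟩, hy'⟩ := hg y hy
        dsimp only
        rw [Nat.cast_le]
        by_contra! hlt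
        have h1 := nrm_pos hm
        have h2 := nrm_lt n
        have h3 : nrm n / 2 ^ (g x + 1) < nrm m / 2 ^ (g y + 1) := by
          calc nrm n / 2 ^ (g x + 1) < 2 / 2 ^ (g x + 1) := by gcongr
            _ ≤ 2 / 2 ^ (g y + 1 + 1) := by
              gcongr
              · norm_num
              · omega
            _ = 1 / 2 ^ (g y + 1) := by
              rw [pow_succ _ (g y + 1)]
              field_simp
            _ ≤ _ := by gcongr
        rw [neg_div] at hx' hy'
        linarith
      · intro x _
        exact Ordinal.natCast_lt_omega0 _
      · intro c
        by_cases hc : ∃ b : ℕ, c = b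
        · obtain ⟨b, rfl⟩ := hc
          refine (hasEmb_NU k).comap (fun x => (x + 1) * 2 ^ (b + 1)) ?_ ?_
          · intro x _ y _ hxy
            dsimp only
            gcongr
          · rintro x ⟨hx, hxb⟩
            have hxb' : g x = b := by exact_mod_cast hxb
            obtain ⟨y, hy, hxy⟩ := hg x hx
            rw [hxb'] at hxy
            have : (x + 1) * 2 ^ (b + 1) = y := by
              rw [hxy]
              field_simp
              ring
            dsimp only
            rwa [this]
        · refine ⟨fun _ => 0, ?_, ?_⟩
          · rintro x ⟨-, hx⟩
            exact absurd ⟨_, hx.symm⟩ hc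
          · rintro x ⟨-, hx⟩
            exact absurd ⟨_, hx.symm⟩ hc

/-! ### Defects -/

theorem chain_le {c : List ℕ} (hc : IsAdditionChain c) : ∀ k < c.length, c.getD k 0 ≤ 2 ^ k := by
  intro k
  induction k using Nat.strong_induction_on with
  | _ k ih =>
    intro hk
    rcases Nat.eq_zero_or_pos k with rfl | hpos
    · rw [hc.1]
      simp
    · obtain ⟨i, j, hi, hj, h⟩ := hc.2 k hpos hk
      rw [h]
      have h1 := ih i hi (hi.trans hk)
      have h2 := ih j hj (hj.trans hk)
      obtain ⟨k, rfl⟩ := Nat.exists_eq_succ_of_ne_zero hpos.ne'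
      have h3 : 2 ^ i ≤ 2 ^ k := Nat.pow_le_pow_right (by norm_num) (by omega)
      have h4 : 2 ^ j ≤ 2 ^ k := Nat.pow_le_pow_right (by norm_num) (by omega)
      rw [Nat.pow_succ]
      omega

theorem chainLength_bounds {A : Set (List ℕ)} (hA : Admissible A) {n : ℕ} (hn : 0 < n) :
    n ≤ 2 ^ chainLength A n ∧
      chainLength A n + 1 ≤ Nat.log 2 n + binaryWeight n := by
  obtain ⟨c, hcA, hc, hlen⟩ := hA.1 n hn
  have hpos : ∀ c, IsAdditionChainFor c n → c.length ≠ 0 := by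
    intro c hc h0
    have := hc.1.1
    rw [List.length_eq_zero_iff.1 h0] at this
    simp at this
  have hmem : c.length - 1 ∈ {r | ∃ c ∈ A, IsAdditionChainFor c n ∧ c.length = r + 1} := by
    have := hpos c hc
    exact ⟨c, hcA, hc, by omega⟩
  constructor
  · obtain ⟨d, -, hd, hdl⟩ := Nat.sInf_mem ⟨_, hmem⟩
    have h1 := chain_le hd.1 (d.length - 1) (by have := hpos d hd; omega)
    rw [hd.2, hdl, Nat.add_sub_cancel] at h1
    exact h1
  · have h1 : chainLength A n ≤ c.length - 1 := Nat.sInf_le hmem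
    have := hpos c hc
    omega

theorem Adefect_eq {A : Set (List ℕ)} (hA : Admissible A) {n : ℕ} (hn : 0 < n) :
    ∃ s : ℕ, chainLength A n = Nat.log 2 n + s ∧ s + 1 ≤ binaryWeight n ∧
      Adefect A n = s - Real.logb 2 (nrm n) ∧ 0 ≤ Adefect A n := by
  obtain ⟨h1, h2⟩ := chainLength_bounds hA hn
  have h3 : Nat.log 2 n ≤ chainLength A n := by
    have h4 := (Nat.pow_log_le_self 2 hn.ne').trans h1
    exact (Nat.pow_le_pow_iff_right (by norm_num)).1 h4
  obtain ⟨s, hs⟩ := Nat.exists_eq_add_of_le h3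
  have hn' : (0 : ℝ) < n := by exact_mod_cast hn
  refine ⟨s, hs, by omega, ?_, ?_⟩
  · rw [Adefect, hs, nrm, Real.logb_div hn'.ne' (by positivity), Real.logb_pow]
    push_cast
    rw [Real.logb_self_eq_one (by norm_num)]
    ring
  · rw [Adefect, sub_nonneg, Real.logb_le_iff_le_rpow (by norm_num) hn', Real.rpow_natCast]
    exact_mod_cast h1

theorem log_mul_two_pow (j : ℕ) {n : ℕ} (hn : 0 < n) :
    Nat.log 2 (n * 2 ^ j) = Nat.log 2 n + j := by
  induction j with
  | zero => simp
  | succ j ih =>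
    rw [pow_succ, ← mul_assoc, Nat.log_mul_base (by norm_num) (by positivity), ih, add_assoc]

theorem exists_stable {A : Set (List ℕ)} (hA : Admissible A) {n : ℕ} (hn : 0 < n) :
    ∃ j, AStable A (2 ^ j * n) := by
  have hs : ∀ j : ℕ, ∃ s : ℕ, chainLength A (2 ^ j * n) = Nat.log 2 n + j + s := by
    intro j
    obtain ⟨s, hs, -⟩ := Adefect_eq hA (n := 2 ^ j * n) (by positivity)
    refine ⟨s, ?_⟩
    rw [hs, mul_comm (2 ^ j) n, log_mul_two_pow j hn]
  choose s hs using hs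
  obtain ⟨j, hj⟩ : ∃ j, ∀ i, s j ≤ s i := by
    exact ⟨Function.argmin s, fun i => Function.argmin_le s i⟩
  refine ⟨j, fun k => ?_⟩
  apply le_antisymm
  · induction k with
    | zero => simp
    | succ k ih =>
      have := hA.2 (2 ^ k * (2 ^ j * n)) (by positivity)
      rw [← mul_assoc, ← pow_succ'] at this
      omega
  · have h1 := hj (k + j)
    rw [← mul_assoc, ← pow_add, hs, hs]
    omega

theorem nrm_pow_mul (j : ℕ) {n : ℕ} (hn : 0 < n) : nrm (2 ^ j * n) = nrm n := by
  rw [nrm, nrm, mul_comm (2 ^ j) n, log_mul_two_pow j hn, pow_add]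
  push_cast
  field_simp

theorem hasEmb_defect {A : Set (List ℕ)} (hA : Admissible A) (r : ℝ) (q : ℕ)
    (hQ : ∀ n : ℕ, 0 < n → Adefect A n ≤ r → binaryWeight n ≤ q + 1) :
    HasEmb (defectSet A ∩ Set.Icc 0 r) (boundSum (q + 1)) := by
  classical
  refine HasEmb.mono ?_ subset_rfl (topType_mul_le q)
  have hrep : ∀ x ∈ defectSet A ∩ Set.Icc 0 r, ∃ s : ℕ, s < q + 1 ∧ (s : ℤ) = ⌈x⌉ ∧
      ∃ y ∈ NU q, x = s - Real.logb 2 (-y) := by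
    rintro _ ⟨⟨n, hn, rfl⟩, -, hle⟩
    obtain ⟨s, -, hsw, hs, -⟩ := Adefect_eq hA hn
    have hw := hQ n hn hle
    refine ⟨s, by omega, ?_, -nrm n, ⟨n, hn, hw, rfl⟩, by rw [neg_neg, hs]⟩
    have h1 := nrm_pos hn
    have h2 := nrm_lt n
    have h3 : 0 ≤ Real.logb 2 (nrm n) := Real.logb_nonneg (by norm_num) h1
    have h4 : Real.logb 2 (nrm n) < 1 := by
      rw [Real.logb_lt_iff_lt_rpow (by norm_num) (by linarith), Real.rpow_one]
      exact h2
    rw [eq_comm, Int.ceil_eq_iff, hs]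
    push_cast
    constructor <;> linarith
  have hce : ∀ x ∈ defectSet A ∩ Set.Icc 0 r, ⌈x⌉.toNat < q + 1 ∧
      ∃ y ∈ NU q, x = (⌈x⌉.toNat : ℝ) - Real.logb 2 (-y) := by
    intro x hx
    obtain ⟨s, hs, hc, h⟩ := hrep x hx
    rw [← hc, Int.toNat_natCast]
    exact ⟨hs, h⟩
  apply HasEmb.fiber (fun x => ((⌈x⌉.toNat : ℕ) : Ordinal.{0}))
  · intro x _ y _ hxy
    dsimp only
    rw [Nat.cast_le]
    exact Int.toNat_le_toNat (Int.ceil_mono hxy)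
  · intro x hx
    rw [Nat.cast_lt]
    exact (hce x hx).1
  · intro c
    by_cases hc : ∃ b : ℕ, c = b
    · obtain ⟨b, rfl⟩ := hc
      refine (hasEmb_NU q).comap (fun x => -(2 : ℝ) ^ ((b : ℝ) - x)) ?_ ?_
      · intro x _ y _ hxy
        dsimp only
        rw [neg_lt_neg_iff]
        exact Real.rpow_lt_rpow_of_exponent_lt (by norm_num) (by linarith)
      · rintro x ⟨hx, hxb⟩
        have hxb' : ⌈x⌉.toNat = b := by exact_mod_cast hxb
        obtain ⟨-, y, hy, hxy⟩ := hce x hx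
        rw [hxb'] at hxy
        have hy0 : 0 < -y := by
          obtain ⟨n, hn, -, rfl⟩ := hy
          have := nrm_pos hn
          linarith
        have : -(2 : ℝ) ^ ((b : ℝ) - x) = y := by
          rw [hxy, sub_sub_cancel, Real.rpow_logb (by norm_num) (by norm_num) hy0, neg_neg]
        dsimp only
        rwa [this]
    · refine ⟨fun _ => 0, ?_, ?_⟩
      · rintro x ⟨-, hx⟩
        exact absurd ⟨_, hx.symm⟩ hc
      · rintro x ⟨-, hx⟩
        exact absurd ⟨_, hx.symm⟩ hc

theorem big_stable {A : Set (List ℕ)} (hA : Admissible A) (r : ℝ) (hr : 0 ≤ r) :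
    Big ⌊r⌋₊ (stableDefectSet A ∩ Set.Icc 0 r) := by
  classical
  set k := ⌊r⌋₊ with hk
  have hkr : (k : ℝ) ≤ r := Nat.floor_le hr
  have hst : ∀ x ∈ NE k, ∃ s : Fin (k + 1),
      ((s : ℕ) : ℝ) - Real.logb 2 (-x) ∈ stableDefectSet A ∩ Set.Icc 0 r := by
    rintro _ ⟨n, hn, hw, rfl⟩
    obtain ⟨j, hj⟩ := exists_stable hA hn
    have hpos : 0 < 2 ^ j * n := by positivity
    obtain ⟨s, -, hsw, hs, h0⟩ := Adefect_eq hA hpos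
    rw [binaryWeight_pow_mul, hw] at hsw
    rw [nrm_pow_mul j hn] at hs
    refine ⟨⟨s, by omega⟩, ?_⟩
    rw [neg_neg]
    dsimp only
    rw [← hs]
    refine ⟨⟨_, hpos, hj, rfl⟩, h0, ?_⟩
    have h3 : 0 ≤ Real.logb 2 (nrm n) := Real.logb_nonneg (by norm_num) (nrm_pos hn)
    have h4 : (s : ℝ) ≤ k := by exact_mod_cast (by omega : s ≤ k)
    linarith
  let c : ℝ → Fin (k + 1) := fun x => if h : x ∈ NE k then (hst x h).choose else 0
  have hc : ∀ x ∈ NE k,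
      ((c x : ℕ) : ℝ) - Real.logb 2 (-x) ∈ stableDefectSet A ∩ Set.Icc 0 r := by
    intro x hx
    have : c x = (hst x hx).choose := dif_pos hx
    rw [this]
    exact (hst x hx).choose_spec
  obtain ⟨i, hi⟩ := (big_NE k).color c
  have hmono : StrictMonoOn (fun x : ℝ => ((i : ℕ) : ℝ) - Real.logb 2 (-x))
      {x ∈ NE k | c x = i} := by
    rintro x - y ⟨⟨n, hn, -, rfl⟩, -⟩ hxy
    have := nrm_pos hn
    have h1 : Real.logb 2 (- -nrm n) < Real.logb 2 (-x) :=
      Real.logb_lt_logb (by norm_num) (by linarith) (by linarith)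
    dsimp only
    linarith
  refine (hi.image hmono).mono ?_
  rintro _ ⟨x, ⟨hx, hxi⟩, rfl⟩
  have := hc x hx
  rwa [hxi] at this

/-- If every positive `n` with `δ^A(n) ≤ r` satisfies `ν₂(n) ≤ Q`, then
`𝒟^A ∩ [0, r]` is well-ordered of order type at least `ω^⌊r⌋` and at most
`ω^(Q-1)·Q + … + ω²·3 + ω·2 + 1`, which is less than `ω^(Q-1)·(Q+1)` and hence less
than `ω^Q`; the same bounds hold for `𝒟^A_st ∩ [0, r]`. -/
theorem initial_segment_defectSet_orderType
    (A : Set (List ℕ)) (hA : Admissible A) (r : ℝ) (hr : 0 ≤ r)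
    (Q : ℕ) (hQ1 : 1 ≤ Q)
    (hQ : ∀ n : ℕ, 0 < n → Adefect A n ≤ r → binaryWeight n ≤ Q) :
    (defectSet A ∩ Set.Icc 0 r).IsWF ∧
    Ordinal.omega0 ^ ((⌊r⌋₊ : ℕ) : Ordinal) ≤ setOrderType (defectSet A ∩ Set.Icc 0 r) ∧
    setOrderType (defectSet A ∩ Set.Icc 0 r) ≤ boundSum Q ∧
    boundSum Q < Ordinal.omega0 ^ ((Q - 1 : ℕ) : Ordinal) * ((Q : Ordinal) + 1) ∧
    Ordinal.omega0 ^ ((Q - 1 : ℕ) : Ordinal) * ((Q : Ordinal) + 1) <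
      Ordinal.omega0 ^ (Q : Ordinal) ∧
    (stableDefectSet A ∩ Set.Icc 0 r).IsWF ∧
    Ordinal.omega0 ^ ((⌊r⌋₊ : ℕ) : Ordinal) ≤
      setOrderType (stableDefectSet A ∩ Set.Icc 0 r) ∧
    setOrderType (stableDefectSet A ∩ Set.Icc 0 r) ≤ boundSum Q := by
  obtain ⟨q, rfl⟩ : ∃ q, Q = q + 1 := ⟨Q - 1, by omega⟩
  have hsub : stableDefectSet A ∩ Set.Icc 0 r ⊆ defectSet A ∩ Set.Icc 0 r := by
    rintro x ⟨⟨n, hn, -, h⟩, hx⟩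
    exact ⟨⟨n, hn, h⟩, hx⟩
  have h1 := hasEmb_defect hA r q hQ
  have h2 := h1.mono hsub le_rfl
  have h3 := big_stable hA r hr
  refine ⟨h1.isWF, (h3.mono hsub).le_type h1.isWF, h1.type_le, ?_, ?_, h2.isWF,
    h3.le_type h2.isWF, h2.type_le⟩
  · rw [Nat.add_sub_cancel]
    exact boundSum_lt' q
  · rw [Nat.add_sub_cancel]
    exact_mod_cast omega_pow_mul_nat_lt q (q + 2)
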